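/- arXiv:1603.07456 — 3 statements merged into one kernel-verified Lean document; each statement's English description precedes it below -/
import Mathlib

section
/- Let θ > 0, λ = 2θ, and let f : [0,∞) → ℝ be bounded and continuous. Then G_f is differentiable on (0,∞), has a right derivative at 0, and for every y > 0, (G_f)'(y) = λ·(f(y) − G_f(y)) = −λ·f(0)·e^{−λy} − λ²·e^{−λy}·∫_0^y f(u)·e^{λu} du + λ·f(y); moreover (G_f)'(0⁺) = 0. -/
/-!
The one-sided fundamental theorem of calculus differentiates the integral in `G lam f` within
`[0, ∞)` at every `y ≥ 0`, the endpoint included. In the product rule the factors `e^{-lam y}` and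
`e^{lam y}` cancel, so `G lam f` solves the linear equation `g' = lam (f - g)`. Its right derivative
at `0` vanishes because `G lam f 0 = f 0`.
-/

open MeasureTheory Real Filter Set

/-- `G lam f y = f 0 · e^{-lam y} + lam · e^{-lam y} · ∫_0^y f(u) e^{lam u} du`. -/
noncomputable def G (lam : ℝ) (f : ℝ → ℝ) (y : ℝ) : ℝ :=
  f 0 * Real.exp (-lam * y) +
    lam * Real.exp (-lam * y) * ∫ u in (0:ℝ)..y, f u * Real.exp (lam * u)

theorem hasDerivWithinAt_integral_Ici {E : Type*} [NormedAddCommGroup E] [NormedSpace ℝ E]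
    [CompleteSpace E] {φ : ℝ → E} {a y : ℝ} (hφ : ContinuousOn φ (Ici a)) (hy : a ≤ y) :
    HasDerivWithinAt (fun x ↦ ∫ u in a..x, φ u) (φ y) (Ici a) y := by
  -- `FTCFilter` has an instance for closed intervals, but none for `𝓝[Ici a] y` with `a < y`.
  have hIcc : ContinuousOn φ (Icc a (y + 1)) := hφ.mono Icc_subset_Ici_self
  have hmem : y ∈ Icc a (y + 1) := ⟨hy, by linarith⟩
  have : Fact (y ∈ Icc a (y + 1)) := ⟨hmem⟩
  have hderiv : HasDerivWithinAt (fun x ↦ ∫ u in a..x, φ u) (φ y) (Icc a (y + 1)) y :=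
    intervalIntegral.integral_hasDerivWithinAt_right
      ((hφ.mono Icc_subset_Ici_self).intervalIntegrable_of_Icc hy)
      (hIcc.stronglyMeasurableAtFilter_nhdsWithin measurableSet_Icc y) (hIcc y hmem)
  refine hderiv.mono_of_mem_nhdsWithin ?_
  rw [← Ici_inter_Iic]
  exact inter_mem_nhdsWithin _ (Iic_mem_nhds (lt_add_one y))

section

variable (lam : ℝ) (f : ℝ → ℝ)

theorem G_zero : G lam f 0 = f 0 := by simp [G]

theorem mul_sub_G (y : ℝ) :
    lam * (f y - G lam f y) =
      -lam * f 0 * Real.exp (-lam * y)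
        - lam ^ 2 * Real.exp (-lam * y) * (∫ u in (0:ℝ)..y, f u * Real.exp (lam * u))
        + lam * f y := by
  rw [G]
  ring

variable {f}

theorem hasDerivWithinAt_G (hf : ContinuousOn f (Ici 0)) {y : ℝ} (hy : 0 ≤ y) :
    HasDerivWithinAt (G lam f) (lam * (f y - G lam f y)) (Ici 0) y := by
  have hint : HasDerivWithinAt (fun x ↦ ∫ u in (0 : ℝ)..x, f u * exp (lam * u))
      (f y * exp (lam * y)) (Ici 0) y :=
    hasDerivWithinAt_integral_Ici (φ := fun u ↦ f u * exp (lam * u))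
      (hf.mul (by fun_prop)) hy
  have hexp : HasDerivWithinAt (fun x ↦ exp (-lam * x)) (exp (-lam * y) * (-lam)) (Ici 0) y :=
    (hasDerivAt_const_mul (-lam)).exp.hasDerivWithinAt
  have hcancel : exp (-lam * y) * exp (lam * y) = 1 := by
    rw [← exp_add, neg_mul, neg_add_cancel, exp_zero]
  refine ((hexp.const_mul (f 0)).add ((hexp.const_mul lam).mul hint)).congr_deriv ?_
  rw [G]
  linear_combination lam * f y * hcancel

theorem hasDerivAt_G (hf : ContinuousOn f (Ici 0)) {y : ℝ} (hy : 0 < y) :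
    HasDerivAt (G lam f) (lam * (f y - G lam f y)) y :=
  (hasDerivWithinAt_G lam hf hy.le).hasDerivAt (Ici_mem_nhds hy)

theorem hasDerivWithinAt_G_zero (hf : ContinuousOn f (Ici 0)) :
    HasDerivWithinAt (G lam f) 0 (Ici 0) 0 := by
  simpa only [G_zero, sub_self, mul_zero] using hasDerivWithinAt_G lam hf le_rfl

theorem G_deriv_general (hf : ContinuousOn f (Ici 0)) :
    (∀ y : ℝ, 0 < y → HasDerivAt (G lam f) (lam * (f y - G lam f y)) y) ∧
    (∀ y : ℝ, 0 < y →
      lam * (f y - G lam f y) =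
        -lam * f 0 * exp (-lam * y)
          - lam ^ 2 * exp (-lam * y) * (∫ u in (0 : ℝ)..y, f u * exp (lam * u))
          + lam * f y) ∧
    HasDerivWithinAt (G lam f) 0 (Ici 0) 0 :=
  ⟨fun _ hy ↦ hasDerivAt_G lam hf hy, fun y _ ↦ mul_sub_G lam f y, hasDerivWithinAt_G_zero lam hf⟩

end

/-- For `f : [0,∞) → ℝ` bounded and continuous, `G_f` is differentiable on `(0,∞)` with
`(G_f)'(y) = λ(f(y) − G_f(y)) = −λ f(0) e^{−λy} − λ² e^{−λy} ∫_0^y f(u) e^{λu} du + λ f(y)`,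
and has right derivative `0` at `0`. -/
theorem G_deriv (θ lam : ℝ) (hθ : 0 < θ) (hlam : lam = 2 * θ)
    (f : ℝ → ℝ) (hfc : ContinuousOn f (Set.Ici 0))
    (C : ℝ) (hfb : ∀ x, 0 ≤ x → |f x| ≤ C) :
    (∀ y : ℝ, 0 < y → HasDerivAt (G lam f) (lam * (f y - G lam f y)) y) ∧
    (∀ y : ℝ, 0 < y →
      lam * (f y - G lam f y) =
        -lam * f 0 * Real.exp (-lam * y)
          - lam ^ 2 * Real.exp (-lam * y) * (∫ u in (0:ℝ)..y, f u * Real.exp (lam * u))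
          + lam * f y) ∧
    HasDerivWithinAt (G lam f) 0 (Set.Ici 0) 0 :=
  G_deriv_general lam hfc
end

section
/- Let θ > 0, λ = 2θ, let f : [0,∞) → ℝ be bounded and continuous, and let a ∈ ℝ and m > 0 satisfy a + m ≥ 0. Define h : [0,∞) → ℝ by h(z) = f(z + a) for z > m and h(z) = G_f(a + m) for 0 ≤ z ≤ m. Then for every y ≥ 0, G_h(y) = G_f(max(y, m) + a). (This is the deterministic identity underlying the flow property of the kernel K: given y ≥ 0, the function y ↦ e^{λy}·G_f(max(y,m)+a) has derivative λ·e^{λy}·h(y) at every y ≠ m.) -/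
open MeasureTheory Real Filter Set

/-!
`G lam f` solves the linear equation `g' = lam * (f - g)` with `g 0 = f 0`, so for `x ≤ y` the value
at `y` depends only on the value at `x` and on `f` between `x` and `y`, in a translation-invariant
way. On `[0, m]` the constant function `h` is its own transform; from `m` on, `G lam h` and
`z ↦ G lam f (z + a)` start from the same value and have the same forcing term, so they agree.
The derivative formula is the same equation multiplied by the integrating factor `exp (lam * z)`.
-/

open scoped Topology

section Integrability

variable {ε : Type*} [TopologicalSpace ε] [TopologicalSpace.PseudoMetrizableSpace ε]
  [ENormedAddMonoid ε] {μ : Measure ℝ} {f : ℝ → ε} {s : Set ℝ} {x y : ℝ}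

lemma intervalIntegrable_of_locallyIntegrableOn [hs : s.OrdConnected]
    (hf : LocallyIntegrableOn f s μ) (hx : x ∈ s) (hy : y ∈ s) : IntervalIntegrable f μ x y :=
  (hf.integrableOn_compact_subset (hs.uIcc_subset hx hy) isCompact_uIcc).intervalIntegrable

end Integrability

lemma hasDerivAt_exp_mul (c x : ℝ) : HasDerivAt (fun z => exp (c * z)) (c * exp (c * x)) x := by
  simpa [mul_comm] using ((hasDerivAt_id x).const_mul c).exp

lemma mul_integral_exp_mul (c x y : ℝ) :
    c * ∫ u in x..y, exp (c * u) = exp (c * y) - exp (c * x) := by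
  rw [← intervalIntegral.integral_const_mul]
  exact intervalIntegral.integral_eq_sub_of_hasDerivAt (fun u _ => hasDerivAt_exp_mul c u)
    (Continuous.intervalIntegrable (by fun_prop) _ _)

lemma hasDerivAt_exp_mul_mul {g : ℝ → ℝ} {k c x : ℝ} (hg : HasDerivAt g (k * (c - g x)) x) :
    HasDerivAt (fun z => exp (k * z) * g z) (k * exp (k * x) * c) x :=
  ((hasDerivAt_exp_mul k x).mul hg).congr_deriv (by ring)

section G

variable {lam a c m x y : ℝ} {f g : ℝ → ℝ}

lemma exp_mul_mul_G (lam : ℝ) (f : ℝ → ℝ) (y : ℝ) :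
    exp (lam * y) * G lam f y = f 0 + lam * ∫ u in (0 : ℝ)..y, f u * exp (lam * u) := by
  have hcancel : exp (lam * y) * exp (-lam * y) = 1 := by rw [← exp_add]; simp
  rw [G]
  linear_combination (f 0 + lam * ∫ u in (0 : ℝ)..y, f u * exp (lam * u)) * hcancel

lemma G_eq_of_eqOn_const (hf : EqOn f (fun _ => c) (uIcc 0 y)) : G lam f y = c := by
  refine mul_left_cancel₀ (exp_ne_zero (lam * y)) ?_
  have hintegral : ∫ u in (0 : ℝ)..y, f u * exp (lam * u) =
      c * ∫ u in (0 : ℝ)..y, exp (lam * u) := by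
    rw [← intervalIntegral.integral_const_mul]
    exact intervalIntegral.integral_congr fun u hu => by simp only [hf hu]
  calc exp (lam * y) * G lam f y
      = c + c * (lam * ∫ u in (0 : ℝ)..y, exp (lam * u)) := by
        rw [exp_mul_mul_G, hintegral, hf left_mem_uIcc, mul_left_comm]
    _ = exp (lam * y) * c := by
        rw [mul_integral_exp_mul, mul_zero, exp_zero]; ring

lemma G_eq_exp_mul_G_add_integral (h₀ : IntervalIntegrable f volume 0 x)
    (hxy : IntervalIntegrable f volume x y) :
    G lam f y = exp (-lam * (y - x)) * G lam f x +
      lam * ∫ u in x..y, exp (-lam * (y - u)) * f u := by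
  refine mul_left_cancel₀ (exp_ne_zero (lam * y)) ?_
  have hexp (u : ℝ) : exp (lam * y) * exp (-lam * (y - u)) = exp (lam * u) := by
    rw [← exp_add]; ring_nf
  have hintegral : exp (lam * y) * ∫ u in x..y, exp (-lam * (y - u)) * f u =
      ∫ u in x..y, f u * exp (lam * u) := by
    rw [← intervalIntegral.integral_const_mul]
    exact intervalIntegral.integral_congr fun u _ => by rw [← mul_assoc, hexp, mul_comm]
  have hsplit := intervalIntegral.integral_add_adjacent_intervals
    (h₀.mul_continuousOn (g := fun u => exp (lam * u)) (by fun_prop))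
    (hxy.mul_continuousOn (g := fun u => exp (lam * u)) (by fun_prop))
  rw [mul_add, ← mul_assoc, hexp, mul_left_comm, hintegral, exp_mul_mul_G, exp_mul_mul_G, ← hsplit]
  ring

lemma G_eq_G_add_of_eqOn (hf₀ : IntervalIntegrable f volume 0 (x + a))
    (hf : IntervalIntegrable f volume (x + a) (y + a)) (hg₀ : IntervalIntegrable g volume 0 x)
    (hgf : EqOn g (fun u => f (u + a)) (uIoc x y)) (hx : G lam g x = G lam f (x + a)) :
    G lam g y = G lam f (y + a) := by
  have hg : IntervalIntegrable g volume x y :=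
    (IntervalIntegrable.comp_add_right_iff (by finiteness) |>.mpr hf).congr hgf.symm
  have hintegral : ∫ u in x..y, exp (-lam * (y - u)) * g u =
      ∫ u in (x + a)..(y + a), exp (-lam * (y + a - u)) * f u := by
    rw [← intervalIntegral.integral_comp_add_right]
    refine intervalIntegral.integral_congr_ae (.of_forall fun u hu => ?_)
    rw [hgf hu, add_sub_add_right_eq_sub]
  rw [G_eq_exp_mul_G_add_integral hg₀ hg, G_eq_exp_mul_G_add_integral hf₀ hf, hintegral, hx,
    add_sub_add_right_eq_sub]

lemma hasDerivAt_G_s6 (hf : IntervalIntegrable f volume 0 y)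
    (hmeas : StronglyMeasurableAtFilter f (𝓝 y)) (hcont : ContinuousAt f y) :
    HasDerivAt (G lam f) (lam * (f y - G lam f y)) y := by
  have hmeas' : StronglyMeasurableAtFilter (fun u => f u * exp (lam * u)) (𝓝 y) := by
    obtain ⟨s, hs, hfs⟩ := hmeas
    exact ⟨s, hs, hfs.mul (by fun_prop)⟩
  have hintegral : HasDerivAt (fun z => ∫ u in (0 : ℝ)..z, f u * exp (lam * u))
      (f y * exp (lam * y)) y :=
    intervalIntegral.integral_hasDerivAt_right (hf.mul_continuousOn (by fun_prop)) hmeas'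
      (hcont.mul (by fun_prop))
  have hcancel : exp (-lam * y) * exp (lam * y) = 1 := by rw [← exp_add]; simp
  have hexp := hasDerivAt_exp_mul (-lam) y
  refine ((hexp.const_mul (f 0)).add ((hexp.const_mul lam).mul hintegral)).congr_deriv ?_
  rw [G]
  linear_combination lam * f y * hcancel

lemma hasDerivAt_G_max_add_of_lt (hym : y < m) :
    HasDerivAt (fun z => G lam f (max z m + a)) 0 y := by
  refine (hasDerivAt_const y (G lam f (m + a))).congr_of_eventuallyEq ?_
  filter_upwards [Iio_mem_nhds hym] with z hz
  rw [max_eq_right hz.le]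

lemma hasDerivAt_G_max_add_of_gt (hmy : m < y) (hf : IntervalIntegrable f volume 0 (y + a))
    (hmeas : StronglyMeasurableAtFilter f (𝓝 (y + a))) (hcont : ContinuousAt f (y + a)) :
    HasDerivAt (fun z => G lam f (max z m + a)) (lam * (f (y + a) - G lam f (y + a))) y := by
  refine ((hasDerivAt_G_s6 hf hmeas hcont).comp_add_const y a).congr_of_eventuallyEq ?_
  filter_upwards [Ioi_mem_nhds hmy] with z hz
  rw [max_eq_left hz.le]

end G

theorem G_flow_identity_general {lam a m : ℝ} {f h : ℝ → ℝ}
    (hf : LocallyIntegrableOn f (Ici 0)) (hm : 0 ≤ m) (ham : 0 ≤ a + m)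
    (hh1 : ∀ z, m < z → h z = f (z + a)) (hh2 : ∀ z, 0 ≤ z → z ≤ m → h z = G lam f (a + m)) :
    (∀ y, 0 ≤ y → G lam h y = G lam f (max y m + a)) ∧
    (∀ y, 0 ≤ y → y ≠ m → (m < y → ContinuousAt f (y + a)) →
      HasDerivAt (fun z => exp (lam * z) * G lam f (max z m + a))
        (lam * exp (lam * y) * h y) y) := by
  rw [add_comm] at ham hh2
  have hconst {y : ℝ} (hy : 0 ≤ y) (hym : y ≤ m) :
      EqOn h (fun _ => G lam f (m + a)) (uIcc 0 y) := fun z hz => by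
    rw [uIcc_of_le hy] at hz
    exact hh2 z hz.1 (hz.2.trans hym)
  refine ⟨fun y hy => ?_, fun y hy hne hcont => hasDerivAt_exp_mul_mul ?_⟩
  · rcases le_total y m with hym | hmy
    · rw [max_eq_right hym, G_eq_of_eqOn_const (hconst hy hym)]
    · rw [max_eq_left hmy]
      have hya : 0 ≤ y + a := by linarith
      refine G_eq_G_add_of_eqOn (intervalIntegrable_of_locallyIntegrableOn hf self_mem_Ici ham)
        (intervalIntegrable_of_locallyIntegrableOn hf ham hya)
        (intervalIntegrable_const.congr ((hconst hm le_rfl).symm.mono uIoc_subset_uIcc))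
        (fun z hz => ?_) (G_eq_of_eqOn_const (hconst hm le_rfl))
      rw [uIoc_of_le hmy] at hz
      exact hh1 z hz.1
  · rcases hne.lt_or_gt with hym | hmy
    · rw [max_eq_right hym.le, hh2 y hy hym.le, sub_self, mul_zero]
      exact hasDerivAt_G_max_add_of_lt hym
    · rw [max_eq_left hmy.le, hh1 y hmy]
      have hya : 0 < y + a := by linarith
      exact hasDerivAt_G_max_add_of_gt hmy
        (intervalIntegrable_of_locallyIntegrableOn hf self_mem_Ici hya.le)
        ⟨Ici 0, Ici_mem_nhds hya, hf.aestronglyMeasurable⟩ (hcont hmy)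

/-- The deterministic identity underlying the flow property of the kernel `K`:
for `f` bounded and continuous on `[0,∞)`, `a ∈ ℝ`, `m > 0` with `a + m ≥ 0`, and
`h(z) = f(z+a)` for `z > m`, `h(z) = G_f(a+m)` for `0 ≤ z ≤ m`, one has
`G_h(y) = G_f(max(y,m) + a)` for every `y ≥ 0`; indeed the function
`y ↦ e^{λy}·G_f(max(y,m)+a)` has derivative `λ·e^{λy}·h(y)` at every `y ≠ m`. -/
theorem G_flow_identity (θ lam : ℝ) (hθ : 0 < θ) (hlam : lam = 2 * θ)
    (f : ℝ → ℝ) (hfc : ContinuousOn f (Set.Ici 0))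
    (C : ℝ) (hfb : ∀ x, 0 ≤ x → |f x| ≤ C)
    (a m : ℝ) (hm : 0 < m) (ham : 0 ≤ a + m)
    (h : ℝ → ℝ)
    (hh1 : ∀ z : ℝ, m < z → h z = f (z + a))
    (hh2 : ∀ z : ℝ, 0 ≤ z → z ≤ m → h z = G lam f (a + m)) :
    (∀ y : ℝ, 0 ≤ y → G lam h y = G lam f (max y m + a)) ∧
    (∀ y : ℝ, 0 ≤ y → y ≠ m →
      HasDerivAt (fun z : ℝ => Real.exp (lam * z) * G lam f (max z m + a))
        (lam * Real.exp (lam * y) * h y) y) := by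
  have hflow := G_flow_identity_general (hfc.locallyIntegrableOn measurableSet_Ici) hm.le ham
    hh1 hh2
  exact ⟨hflow.1, fun y hy hne => hflow.2 y hy hne fun hmy =>
    hfc.continuousAt (Ici_mem_nhds (by linarith))⟩
end

section
/- Let θ > 0 and t > 0. Then for every x ∈ ℝ, g_t''(x) = 2θ·g_t'(x) + 2θ·(x/√(2π t³))·exp(−x²/(2t)). -/
open MeasureTheory Real Filter Set

/-- Complementary error function `erfc(x) = (2/√π)·∫_x^∞ e^{−y²} dy`. -/
noncomputable def erfc (x : ℝ) : ℝ :=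
  (2 / Real.sqrt Real.pi) * ∫ y in Set.Ioi x, Real.exp (-y ^ 2)

/-- `g_t(x) = θ·exp(2θx + 2θ²t)·erfc(x/√(2t) + θ·√(2t))`. -/
noncomputable def gfun (θ t x : ℝ) : ℝ :=
  θ * Real.exp (2 * θ * x + 2 * θ ^ 2 * t) *
    erfc (x / Real.sqrt (2 * t) + θ * Real.sqrt (2 * t))

/-!
Let `φ_t` be the density of the centred Gaussian of variance `t`. Completing the square,
`exp(2θx + 2θ²t) · exp(-(x/√(2t) + θ√(2t))²) = exp(-x²/(2t))`, so differentiating the `erfc` factor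
of `g_t` produces a multiple of `φ_t`, and `g_t` solves the first-order equation
`g_t' = 2θ (g_t - φ_t)`. Differentiating once more, `φ_t'(x) = -(x/t) φ_t(x)` gives the
inhomogeneous term.
-/

open ProbabilityTheory
open scoped NNReal Topology

theorem hasDerivAt_integral_Ioi {E : Type*} [NormedAddCommGroup E] [NormedSpace ℝ E]
    [CompleteSpace E] {f : ℝ → E} {a b : ℝ} (hab : a < b) (hf : IntegrableOn f (Ioi a))
    (hb : ContinuousAt f b) : HasDerivAt (fun x ↦ ∫ y in Ioi x, f y) (-f b) b := by
  have tail_eq : ∀ᶠ x in 𝓝 b,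
      ∫ y in Ioi x, f y = (∫ y in Ioi a, f y) - ∫ y in a..x, f y := by
    filter_upwards [Ioi_mem_nhds hab] with x hx
    rw [← intervalIntegral.integral_Ioi_sub_Ioi hf (le_of_lt hx), sub_sub_cancel]
  have hf_interval : IntervalIntegrable f volume a b :=
    (intervalIntegrable_iff_integrableOn_Ioc_of_le hab.le).2 (hf.mono_set Ioc_subset_Ioi_self)
  have hf_meas : StronglyMeasurableAtFilter f (𝓝 b) :=
    ⟨Ioi a, Ioi_mem_nhds hab, hf.aestronglyMeasurable⟩
  exact ((intervalIntegral.integral_hasDerivAt_right hf_interval hf_meas hb).const_sub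
    _).congr_of_eventuallyEq tail_eq

theorem hasDerivAt_erfc (x : ℝ) : HasDerivAt erfc (-(2 / √π * exp (-x ^ 2))) x := by
  have integrable_gaussian : Integrable fun y : ℝ ↦ exp (-y ^ 2) := by
    simpa using integrable_exp_neg_mul_sq one_pos
  have continuous_gaussian : Continuous fun y : ℝ ↦ exp (-y ^ 2) := by fun_prop
  rw [← mul_neg]
  exact (hasDerivAt_integral_Ioi (sub_one_lt x) integrable_gaussian.integrableOn
    continuous_gaussian.continuousAt).const_mul _

theorem hasDerivAt_gaussianPDFReal (μ : ℝ) (v : ℝ≥0) (x : ℝ) :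
    HasDerivAt (gaussianPDFReal μ v) (-((x - μ) / v) * gaussianPDFReal μ v x) x := by
  have hasDerivAt_exponent :
      HasDerivAt (fun y ↦ -(y - μ) ^ 2 / (2 * v)) (-((x - μ) / v)) x := by
    refine ((((hasDerivAt_id x).sub_const μ).pow 2).neg.div_const (2 * v : ℝ)).congr_deriv ?_
    simp only [id]
    ring
  refine (hasDerivAt_exponent.exp.const_mul (√(2 * π * v))⁻¹).congr_deriv ?_
  rw [gaussianPDFReal]
  ring

theorem exp_mul_exp_neg_sq_eq {t : ℝ} (ht : 0 < t) (θ x : ℝ) :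
    exp (2 * θ * x + 2 * θ ^ 2 * t) * exp (-(x / √(2 * t) + θ * √(2 * t)) ^ 2) =
      exp (-x ^ 2 / (2 * t)) := by
  have sq_add : (x / √(2 * t) + θ * √(2 * t)) ^ 2 =
      x ^ 2 / (2 * t) + 2 * θ * x + 2 * θ ^ 2 * t := by
    rw [add_sq, div_pow, mul_pow, sq_sqrt (by positivity)]
    field_simp
  rw [← exp_add, sq_add]
  ring_nf

theorem hasDerivAt_gfun (θ : ℝ) {t : ℝ≥0} (ht : 0 < t) (x : ℝ) :
    HasDerivAt (gfun θ t) (2 * θ * (gfun θ t x - gaussianPDFReal 0 t x)) x := by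
  have hasDerivAt_prefactor : HasDerivAt (fun y ↦ θ * exp (2 * θ * y + 2 * θ ^ 2 * t))
      (θ * (exp (2 * θ * x + 2 * θ ^ 2 * t) * (2 * θ * 1))) x :=
    (((hasDerivAt_id x).const_mul (2 * θ)).add_const _).exp.const_mul θ
  have hasDerivAt_arg : HasDerivAt (fun y ↦ y / √(2 * t) + θ * √(2 * t)) (1 / √(2 * t)) x :=
    ((hasDerivAt_id x).div_const _).add_const _
  have sqrt_split : √(2 * π * t) = √π * √(2 * t) := by
    rw [← sqrt_mul pi_pos.le]
    ring_nf
  refine (hasDerivAt_prefactor.mul ((hasDerivAt_erfc _).comp x hasDerivAt_arg)).congr_deriv ?_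
  rw [gfun, gaussianPDFReal, sub_zero, sqrt_split, ← exp_mul_exp_neg_sq_eq (mod_cast ht) θ x,
    Function.comp_apply]
  field_simp
  ring

theorem div_mul_gaussianPDFReal_zero (t : ℝ≥0) (x : ℝ) :
    x / t * gaussianPDFReal 0 t x = x / √(2 * π * t ^ 3) * exp (-x ^ 2 / (2 * t)) := by
  have sqrt_cube : √(2 * π * t ^ 3) = t * √(2 * π * t) := by
    rw [show 2 * π * (t : ℝ) ^ 3 = t ^ 2 * (2 * π * t) by ring, sqrt_mul (by positivity),
      sqrt_sq t.coe_nonneg]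
  rw [gaussianPDFReal, sub_zero, sqrt_cube, ← mul_assoc, ← div_eq_mul_inv, div_div]

theorem gfun_deriv2_general (θ t : ℝ) (ht : 0 < t) (x : ℝ) :
    HasDerivAt (deriv (gfun θ t))
      (2 * θ * deriv (gfun θ t) x
        + 2 * θ * (x / √(2 * π * t ^ 3)) * exp (-x ^ 2 / (2 * t))) x := by
  lift t to ℝ≥0 using ht.le
  have hasDerivAt_gfun_t := hasDerivAt_gfun θ (mod_cast ht : 0 < t)
  have deriv_eq : deriv (gfun θ t) = fun y ↦ 2 * θ * (gfun θ t y - gaussianPDFReal 0 t y) :=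
    funext fun y ↦ (hasDerivAt_gfun_t y).deriv
  have second_deriv := ((hasDerivAt_gfun_t x).differentiableAt.hasDerivAt.sub
    (hasDerivAt_gaussianPDFReal 0 t x)).const_mul (2 * θ)
  rw [sub_zero, neg_mul, sub_neg_eq_add, div_mul_gaussianPDFReal_zero, mul_add,
    ← mul_assoc] at second_deriv
  nth_rewrite 1 [deriv_eq]
  exact second_deriv

/-- For `θ > 0` and `t > 0`,
`g_t''(x) = 2θ·g_t'(x) + 2θ·(x/√(2πt³))·exp(−x²/(2t))` for every `x ∈ ℝ`. -/
theorem gfun_deriv2 (θ t : ℝ) (hθ : 0 < θ) (ht : 0 < t) :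
    ∀ x : ℝ, HasDerivAt (deriv (gfun θ t))
      (2 * θ * deriv (gfun θ t) x
        + 2 * θ * (x / Real.sqrt (2 * Real.pi * t ^ 3)) * Real.exp (-x ^ 2 / (2 * t))) x :=
  gfun_deriv2_general θ t ht
end
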